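/- arXiv:1207.3769 — 2 statements merged into one kernel-verified Lean document; each statement's English description precedes it below -/
import Mathlib

section
/- Let A₀ ⊆ A be rings such that A is free as a left and right A₀-module, and A₀ is a direct summand of A as an (A₀, A₀)-bimodule. If a left A₀-module M has infinite projective dimension over A₀, then the left A-module A ⊗_{A₀} M has infinite projective dimension over A. -/
open CategoryTheory
open scoped TensorProduct

/-- The `i`-th Ext group of two `A`-modules, as a `ℤ`-module. -/
noncomputable def extMod (A : Type) [Ring A] (i : ℕ) (M N : ModuleCat A) : ModuleCat ℤ :=
  ((Ext ℤ (ModuleCat A) i).obj (Opposite.op M)).obj N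

/-- `M` has projective dimension `≤ r` over `A`, expressed via vanishing of `Ext^i(M, -)`
for `i > r`. -/
def projDimLE (A : Type) [Ring A] (M : ModuleCat A) (r : ℕ) : Prop :=
  ∀ (N : ModuleCat A) (i : ℕ), r < i → Subsingleton (extMod A i M N)

/-- The defining relations of the (noncommutative) tensor product `A ⊗_{A₀} M`,
inside `A ⊗_ℤ M`. -/
def tensorRel (A₀ A : Type) [Ring A₀] [Ring A] (f : A₀ →+* A)
    (M : Type) [AddCommGroup M] [Module A₀ M] : Submodule A (TensorProduct ℤ A M) :=
  Submodule.span A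
    {x | ∃ (a : A) (r : A₀) (m : M), x = (a * f r) ⊗ₜ[ℤ] m - a ⊗ₜ[ℤ] (r • m)}

/-- The tensor product `A ⊗_{A₀} M`, as a left `A`-module. -/
abbrev TensorOver (A₀ A : Type) [Ring A₀] [Ring A] (f : A₀ →+* A)
    (M : Type) [AddCommGroup M] [Module A₀ M] : Type :=
  TensorProduct ℤ A M ⧸ tensorRel A₀ A f M

/-! Since `A` is projective as a left `A₀`-module, restriction of scalars preserves projective
resolutions, so its adjunction with coextension gives `Ext_{A₀}(X, N) ≅ Ext_A(X, Hom_{A₀}(A, N))`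
for every `A`-module `X`; hence restriction does not increase projective dimension. The bimodule
retraction makes `M` a direct summand of the restriction of `A ⊗_{A₀} M`, so the projective
dimension of `M` is at most that of `A ⊗_{A₀} M`. -/

section ExtAdjunction

universe v

variable (R : Type*) [Ring R] {C D : Type*} [Category.{v} C] [Category.{v} D]

/-- The hom-set bijection of an adjunction `F ⊣ G` with `F` an `R`-linear functor, as an `R`-linear
equivalence. -/
def adjunctionHomLinearEquiv [Preadditive C] [Preadditive D] [Linear R C] [Linear R D]
    {F : C ⥤ D} {G : D ⥤ C} [F.Additive] [F.Linear R] (adj : F ⊣ G) (X : C) (Y : D) :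
    (F.obj X ⟶ Y) ≃ₗ[R] (X ⟶ G.obj Y) :=
  LinearEquiv.symm
    { (adj.homEquiv X Y).symm with
      map_add' := fun g h => by simp [Adjunction.homEquiv_counit]
      map_smul' := fun c g => by simp [Adjunction.homEquiv_counit] }

variable [Abelian C] [Abelian D] [Linear R C] [Linear R D] {F : C ⥤ D} {G : D ⥤ C}
  [F.Additive] [F.Linear R]

/-- The isomorphism `Hom(F K, Y) ≅ Hom(K, G Y)` of cochain complexes induced by an adjunction
`F ⊣ G`, for a chain complex `K`. -/
noncomputable def adjunctionLinearYonedaObjIso (adj : F ⊣ G) (K : ChainComplex C ℕ) (Y : D) :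
    ChainComplex.linearYonedaObj ((F.mapHomologicalComplex _).obj K) R Y ≅
      K.linearYonedaObj R (G.obj Y) :=
  HomologicalComplex.Hom.isoOfComponents
    (fun i => (adjunctionHomLinearEquiv R adj (K.X i) Y).toModuleIso)
    fun i j _ => by
      ext g
      exact (adj.homEquiv_naturality_left (K.d j i) g).symm

/-- `Ext(F X, Y) ≅ Ext(X, G Y)` for an adjunction `F ⊣ G` whose left adjoint `F` is exact and
preserves projective objects. -/
noncomputable def extAdjunctionIso [EnoughProjectives C] [EnoughProjectives D]
    [F.PreservesHomology] [F.PreservesProjectiveObjects] (adj : F ⊣ G) (n : ℕ) (X : C) (Y : D) :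
    ((Ext R D n).obj (Opposite.op (F.obj X))).obj Y ≅
      ((Ext R C n).obj (Opposite.op X)).obj (G.obj Y) :=
  let P := projectiveResolution X
  (F.mapProjectiveResolution P).isoExt n Y ≪≫
    (HomologicalComplex.homologyFunctor _ _ n).mapIso
      (adjunctionLinearYonedaObjIso R adj P.complex Y) ≪≫
    (P.isoExt n (G.obj Y)).symm

end ExtAdjunction

section RestrictScalars

universe u₁ u₂ v

variable {R : Type u₁} {S : Type u₂} [Ring R] [Ring S] (f : R →+* S)

theorem coextendScalars_preservesEpimorphisms
    [Module.Projective R ((ModuleCat.restrictScalars f).obj (ModuleCat.of S S))] :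
    (ModuleCat.coextendScalars.{u₁, u₂, v} f).PreservesEpimorphisms where
  preserves e he := by
    rw [ModuleCat.epi_iff_surjective] at he ⊢
    intro g
    obtain ⟨g', hg'⟩ := Module.projective_lifting_property e.hom
      (ModuleCat.CoextendScalars.equiv f _ g) he
    exact ⟨(ModuleCat.CoextendScalars.equiv f _).symm g', ModuleCat.CoextendScalars.ext hg'⟩

theorem restrictScalars_preservesProjectiveObjects
    [Module.Projective R ((ModuleCat.restrictScalars f).obj (ModuleCat.of S S))] :
    (ModuleCat.restrictScalars.{max v u₂} f).PreservesProjectiveObjects :=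
  have := coextendScalars_preservesEpimorphisms.{u₁, u₂, max v u₂} f
  Functor.preservesProjectiveObjects_of_adjunction_of_preservesEpimorphisms
    (ModuleCat.restrictCoextendScalarsAdj.{v, u₁, u₂} f)

theorem restrictScalars_preservesHomology : (ModuleCat.restrictScalars.{v} f).PreservesHomology :=
  Functor.preservesHomology_of_map_exact _ fun T hT => by
    rw [ShortComplex.moduleCat_exact_iff] at hT ⊢
    exact hT

end RestrictScalars

section ProjDimLE

variable {A₀ A : Type} [Ring A₀] [Ring A] {r : ℕ}

theorem projDimLE_restrictScalars (f : A₀ →+* A)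
    [Module.Projective A₀ ((ModuleCat.restrictScalars f).obj (ModuleCat.of A A))]
    {X : ModuleCat A} (hX : projDimLE A X r) :
    projDimLE A₀ ((ModuleCat.restrictScalars f).obj X) r := by
  intro N i hi
  have := restrictScalars_preservesProjectiveObjects.{0, 0, 0} f
  have := restrictScalars_preservesHomology.{0, 0, 0} f
  let e := extAdjunctionIso ℤ (ModuleCat.restrictCoextendScalarsAdj f) i X N
  exact e.toLinearEquiv.toEquiv.subsingleton_congr.2 (hX _ i hi)

theorem projDimLE_of_retract {M M' : ModuleCat A} (ρ : Retract M M') (hM' : projDimLE A M' r) :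
    projDimLE A M r := by
  intro N i hi
  have := hM' N i hi
  let σ : Retract (extMod A i M N) (extMod A i M' N) :=
    (ρ.op.map (Ext ℤ (ModuleCat A) i)).map ((evaluation _ _).obj N)
  exact ((ModuleCat.epi_iff_surjective σ.r).1 inferInstance).subsingleton

end ProjDimLE

section TensorOver

variable {A₀ A : Type} [Ring A₀] [Ring A] (f : A₀ →+* A)

/-- The unit `m ↦ 1 ⊗ m` of the extension of scalars `A ⊗_{A₀} -`. -/
noncomputable def tensorUnit (M : ModuleCat A₀) :
    M ⟶ (ModuleCat.restrictScalars f).obj (ModuleCat.of A (TensorOver A₀ A f M)) :=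
  ModuleCat.ofHom (Y := (ModuleCat.restrictScalars f).obj (ModuleCat.of A (TensorOver A₀ A f M)))
    { toFun := fun m => (tensorRel A₀ A f M).mkQ (1 ⊗ₜ m)
      map_add' := fun m m' => by rw [TensorProduct.tmul_add]; exact map_add _ _ _
      map_smul' := fun r m => by
        have hrel : (tensorRel A₀ A f M).mkQ ((1 * f r) ⊗ₜ m) =
            (tensorRel A₀ A f M).mkQ (1 ⊗ₜ (r • m)) :=
          (Submodule.Quotient.eq _).2 (Submodule.subset_span ⟨1, r, m, rfl⟩)
        rw [← hrel, one_mul, ← mul_one (f r)]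
        rfl }

variable {f}

/-- The `A`-linear map `a ⊗ m ↦ a • φ m` out of `A ⊗_{A₀} M` induced by an `A₀`-linear map `φ`
from `M` to an `A`-module. -/
noncomputable def tensorLift {M : ModuleCat A₀} {B : ModuleCat A}
    (φ : M ⟶ (ModuleCat.restrictScalars f).obj B) :
    ModuleCat.of A (TensorOver A₀ A f M) ⟶ B :=
  ModuleCat.ofHom <| (tensorRel A₀ A f M).liftQ
    (TensorProduct.AlgebraTensorModule.lift
      (LinearMap.toSpanSingleton A (M →ₗ[ℤ] B) φ.hom.toAddMonoidHom.toIntLinearMap)) <| by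
    rw [tensorRel, Submodule.span_le]
    rintro _ ⟨a, r, m, rfl⟩
    have hφ : (φ (r • m) : B) = f r • (φ m : B) := φ.hom.map_smul r m
    have hrel : (a * f r) • (φ m : B) - a • (φ (r • m) : B) = 0 := by
      rw [hφ, mul_smul, sub_self]
    rw [SetLike.mem_coe, LinearMap.mem_ker, map_sub]
    exact hrel

theorem tensorUnit_comp_tensorLift {M : ModuleCat A₀} {B : ModuleCat A}
    (φ : M ⟶ (ModuleCat.restrictScalars f).obj B) :
    tensorUnit f M ≫ (ModuleCat.restrictScalars f).map (tensorLift φ) = φ := by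
  ext m
  exact one_smul A (φ m : B)

/-- The `A₀`-linear map from `M` to its coextension `Hom_{A₀}(A, M)` sending `m` to
`a ↦ π a • m`, where `π : A → A₀` is a map of `(A₀, A₀)`-bimodules. -/
noncomputable def toCoextendScalars (π : A →+ A₀)
    (hπl : ∀ (r : A₀) (a : A), π (f r * a) = r * π a)
    (hπr : ∀ (a : A) (r : A₀), π (a * f r) = π a * r) (M : ModuleCat A₀) :
    M ⟶ (ModuleCat.restrictScalars f).obj ((ModuleCat.coextendScalars f).obj M) :=
  ModuleCat.ofHom
    (Y := (ModuleCat.restrictScalars f).obj ((ModuleCat.coextendScalars f).obj M))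
    { toFun := fun m => (ModuleCat.CoextendScalars.equiv f M).symm
        { toFun := fun a => π a • m
          map_add' := fun a b => (congrArg (· • m) (map_add π a b)).trans (add_smul _ _ m)
          map_smul' := fun r a => (congrArg (· • m) (hπl r a)).trans (mul_smul r (π a) m) }
      map_add' := fun m m' =>
        ModuleCat.CoextendScalars.ext <| LinearMap.ext fun a => smul_add (π a) m m'
      map_smul' := fun r m => ModuleCat.CoextendScalars.ext <| LinearMap.ext fun a =>
        (mul_smul (π a) r m).symm.trans (congrArg (· • m) (hπr a r).symm) }

theorem toCoextendScalars_comp_counit (π : A →+ A₀)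
    (hπl : ∀ (r : A₀) (a : A), π (f r * a) = r * π a)
    (hπr : ∀ (a : A) (r : A₀), π (a * f r) = π a * r) (hπ1 : π 1 = 1) (M : ModuleCat A₀) :
    toCoextendScalars π hπl hπr M ≫ (ModuleCat.restrictCoextendScalarsAdj f).counit.app M =
      𝟙 M := by
  ext m
  exact (congrArg (· • m) hπ1).trans (one_smul A₀ m)

/-- A bimodule retraction `π : A → A₀` exhibits `M` as a direct summand of the restriction of
`A ⊗_{A₀} M` to `A₀`. The projection is `a ⊗ m ↦ π a • m`, written as the `A`-linear map
to the coextension of `M` that corresponds to it by adjunction. -/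
noncomputable def retractRestrictTensorOver (π : A →+ A₀)
    (hπl : ∀ (r : A₀) (a : A), π (f r * a) = r * π a)
    (hπr : ∀ (a : A) (r : A₀), π (a * f r) = π a * r) (hπ1 : π 1 = 1) (M : ModuleCat A₀) :
    Retract M
      ((ModuleCat.restrictScalars f).obj (ModuleCat.of A (TensorOver A₀ A f M))) where
  i := tensorUnit f M
  r := (ModuleCat.restrictScalars f).map (tensorLift (toCoextendScalars π hπl hπr M)) ≫
    (ModuleCat.restrictCoextendScalarsAdj f).counit.app M
  retract := by
    rw [← Category.assoc, tensorUnit_comp_tensorLift, toCoextendScalars_comp_counit π hπl hπr hπ1]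

end TensorOver

theorem stmt2_general {A₀ A : Type} [Ring A₀] [Ring A] (f : A₀ →+* A)
    [Module.Projective A₀ ((ModuleCat.restrictScalars f).obj (ModuleCat.of A A))]
    (π : A →+ A₀)
    (hπl : ∀ (r : A₀) (a : A), π (f r * a) = r * π a)
    (hπr : ∀ (a : A) (r : A₀), π (a * f r) = π a * r)
    (hπ1 : π 1 = 1)
    (M : ModuleCat A₀) {r : ℕ}
    (hr : projDimLE A (ModuleCat.of A (TensorOver A₀ A f M)) r) :
    projDimLE A₀ M r :=
  projDimLE_of_retract (retractRestrictTensorOver π hπl hπr hπ1 M)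
    (projDimLE_restrictScalars f hr)

/-- let `A₀ ⊆ A` be rings (inclusion `f`) such that `A` is free as a left and
right `A₀`-module, and `A₀` is a direct summand of `A` as an `(A₀, A₀)`-bimodule (i.e. there
is a bimodule retraction `π : A → A₀` with `π ∘ f = id`).  If a left `A₀`-module `M` has
infinite projective dimension over `A₀`, then `A ⊗_{A₀} M` has infinite projective dimension
over `A`. -/
theorem stmt2 (A₀ A : Type) [Ring A₀] [Ring A] (f : A₀ →+* A)
    (hf : Function.Injective f)
    (hfreeL : Module.Free A₀ ((ModuleCat.restrictScalars f).obj (ModuleCat.of A A)))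
    (hfreeR : Module.Free A₀ᵐᵒᵖ
      ((ModuleCat.restrictScalars (RingHom.op f)).obj (ModuleCat.of Aᵐᵒᵖ Aᵐᵒᵖ)))
    (π : A →+ A₀)
    (hπl : ∀ (r : A₀) (a : A), π (f r * a) = r * π a)
    (hπr : ∀ (a : A) (r : A₀), π (a * f r) = π a * r)
    (hπf : ∀ r : A₀, π (f r) = r)
    (M : ModuleCat A₀)
    (hM : ∀ r : ℕ, ¬ projDimLE A₀ M r) :
    ∀ r : ℕ, ¬ projDimLE A (ModuleCat.of A (TensorOver A₀ A f M)) r :=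
  fun _ hr => hM _ (stmt2_general f π hπl hπr (map_one f ▸ hπf 1) M hr)
end

section
/- Let R ⊆ S be a free α-Frobenius extension of rings. Then R and S have the same self-injective dimension: the injective dimension of S as a left (resp. right) S-module equals the injective dimension of R as a left (resp. right) R-module. -/
open CategoryTheory

/-- `N` has injective dimension `≤ r` over `A`, expressed via vanishing of `Ext^i(-, N)`
for `i > r`. -/
def injDimLE (A : Type) [Ring A] (N : ModuleCat A) (r : ℕ) : Prop :=
  ∀ (M : ModuleCat A) (i : ℕ), r < i → Subsingleton (extMod A i M N)

/-- An additive map `ψ : S → R` is left `R`-linear for the `α`-twisted `R`-action on the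
target, i.e. `ψ(r·x) = α(r)·ψ(x)`; these are the elements of `Hom_R(S, _αR)`. -/
def IsTwistedRLinear {S : Type} [Ring S] {R : Subring S} (α : R ≃+* R)
    (ψ : S →+ R) : Prop :=
  ∀ (r : R) (x : S), ψ ((r : S) * x) = α r * ψ x

/-!
An `α`-Frobenius extension `R ⊆ S` carries a form `S → R` that is linear on the left through one
ring homomorphism `g : R → S` and on the right through another, `f = g ∘ α`, together with dual
bases. The unit `m ↦ (u ↦ form u • m)` and the counit `ψ ↦ ∑ i, right i • ψ (left i)` make
coextension along `g` left adjoint to restriction along `f`; it is always right adjoint to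
restriction along `g`. Hence coextension along `g` and restriction along `f` are exact, and both
preserve injectives because their left adjoints preserve monomorphisms, so neither increases
injective dimension. Coextension sends `R` to `S`, and `R` is a direct summand of the restriction
of `S` once the form takes the value `1`. The notion of Frobenius system is self-dual under
passage to opposite rings, which gives the statement for right modules.
-/

universe w v₁ v₂ u u₁ u₂

section InjectiveDimension

open Limits

lemma subsingleton_derivedExt_succ_iff (k : Type*) [Ring k] {C : Type u} [Category.{v₁} C]
    [Abelian C] [Linear k C] [EnoughProjectives C] [HasExt.{w} C] (X Y : C) (i : ℕ) :
    Subsingleton (((Ext k C (i + 1)).obj (Opposite.op X)).obj Y) ↔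
      Subsingleton (Abelian.Ext.{w} X Y (i + 1)) := by
  let P := projectiveResolution X
  have derived_iff : Subsingleton (((Ext k C (i + 1)).obj (Opposite.op X)).obj Y) ↔
      ∀ φ : P.complex.X (i + 1) ⟶ Y, P.complex.d (i + 2) (i + 1) ≫ φ = 0 →
        ∃ χ : P.complex.X i ⟶ Y, P.complex.d (i + 1) i ≫ χ = φ := by
    rw [← ModuleCat.isZero_iff_subsingleton, (P.isoExt (R := k) (i + 1) Y).isZero_iff,
      ← HomologicalComplex.exactAt_iff_isZero_homology,
      HomologicalComplex.exactAt_iff' _ i (i + 1) (i + 2) (by simp) (by simp),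
      ShortComplex.moduleCat_exact_iff]
    rfl
  rw [derived_iff]
  constructor
  · intro factors
    refine subsingleton_of_forall_eq 0 fun e => ?_
    obtain ⟨φ, hφ, rfl⟩ := P.extMk_surjective e (i + 2) rfl
    exact (P.extMk_eq_zero_iff φ _ _ hφ i rfl).2 (factors φ hφ)
  · intro _ φ hφ
    exact (P.extMk_eq_zero_iff φ (i + 2) rfl hφ i rfl).1 (Subsingleton.elim _ _)

lemma injDimLE_iff_hasInjectiveDimensionLE {A : Type} [Ring A] {N : ModuleCat A} {r : ℕ} :
    injDimLE A N r ↔ HasInjectiveDimensionLE N r := by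
  constructor
  · intro h
    refine hasInjectiveDimensionLT_of_enoughProjectives N (r + 1) fun M => ?_
    exact (subsingleton_derivedExt_succ_iff ℤ M N r).1 (h M (r + 1) r.lt_succ_self)
  · rintro h M (_ | i) hi
    · exact absurd hi r.not_lt_zero
    · exact (subsingleton_derivedExt_succ_iff ℤ M N i).2
        (HasInjectiveDimensionLT.subsingleton N (r + 1) (i + 1) hi M)

lemma hasInjectiveDimensionLE_obj {C : Type u₁} {D : Type u₂} [Category.{v₁} C] [Category.{v₂} D]
    [Abelian C] [Abelian D] [EnoughInjectives C] (F : C ⥤ D)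
    [PreservesFiniteLimits F] [PreservesFiniteColimits F] [F.PreservesInjectiveObjects]
    {X : C} {r : ℕ} (hX : HasInjectiveDimensionLE X r) : HasInjectiveDimensionLE (F.obj X) r := by
  induction r generalizing X with
  | zero =>
    have : Injective X := injective_iff_hasInjectiveDimensionLT_one.2 hX
    exact injective_iff_hasInjectiveDimensionLT_one.1 (F.injective_obj X)
  | succ r ih =>
    let I : InjectivePresentation X := Classical.arbitrary _
    have hS : (ShortComplex.mk _ _ (cokernel.condition I.f)).ShortExact :=
      { exact := ShortComplex.exact_cokernel I.f }
    have cokernel_dim := (hS.hasInjectiveDimensionLT_X₃_iff r I.injective).2 hX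
    exact ((hS.map_of_exact F).hasInjectiveDimensionLT_X₃_iff r
      (F.injective_obj_of_injective I.injective)).1 (ih cokernel_dim)

end InjectiveDimension

section Coextension

variable {A B : Type u} [Ring A] [Ring B]

/-- The element of the coextension `Hom_A(B, M)` along `g : A →+* B` given by an additive map
`B → M` that is left `A`-linear through `g`. -/
noncomputable def coextendMk (g : A →+* B) (M : ModuleCat.{u} A) (ψ : B →+ M)
    (hψ : ∀ a u, ψ (g a * u) = a • ψ u) : (ModuleCat.coextendScalars g).obj M :=
  (ModuleCat.CoextendScalars.equiv g M).symm
    { toFun := fun u : B => ψ u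
      map_add' := ψ.map_add
      map_smul' := hψ }

/-- The additive map `B → M` underlying an element of the coextension `Hom_A(B, M)`. -/
noncomputable def coextendEval {g : A →+* B} {M : ModuleCat.{u} A} :
    (ModuleCat.coextendScalars g).obj M →+ B →+ M where
  toFun ψ := (ModuleCat.CoextendScalars.equiv g M ψ).toAddMonoidHom
  map_zero' := rfl
  map_add' _ _ := rfl

variable {g : A →+* B} {M : ModuleCat.{u} A}

lemma coextendEval_injective :
    Function.Injective (coextendEval : (ModuleCat.coextendScalars g).obj M →+ B →+ M) :=
  fun _ _ h => ModuleCat.CoextendScalars.ext (LinearMap.ext fun u => DFunLike.congr_fun h u)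

@[simp]
lemma coextendEval_smul (b : B) (ψ : (ModuleCat.coextendScalars g).obj M) (u : B) :
    coextendEval (b • ψ) u = coextendEval ψ (u * b) :=
  rfl

lemma coextendEval_sum_smul {ι : Type*} [Fintype ι] (b : ι → B)
    (ψ : ι → (ModuleCat.coextendScalars g).obj M) (u : B) :
    coextendEval (∑ i, b i • ψ i) u = ∑ i, coextendEval (ψ i) (u * b i) := by
  simp [map_sum]

lemma coextendEval_map_mul (ψ : (ModuleCat.coextendScalars g).obj M) (a : A) (u : B) :
    coextendEval ψ (g a * u) = a • coextendEval ψ u :=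
  (ModuleCat.CoextendScalars.equiv g M ψ).map_smul a u

end Coextension

/-- A Frobenius system relating two ring homomorphisms `f g : A →+* B`: a form `B → A` which is
left `A`-linear through `g` and right `A`-linear through `f`, with a pair of dual bases. The
`α`-Frobenius extensions are the case `f = g ∘ α`; keeping `f` and `g` apart makes the notion
symmetric under passing to opposite rings. -/
structure FrobeniusSystem {A : Type u₁} {B : Type u₂} [Ring A] [Ring B] (f g : A →+* B)
    (ι : Type*) [Fintype ι] where
  form : B →+ A
  left : ι → B
  right : ι → B
  form_map_mul (a : A) (u : B) : form (g a * u) = a * form u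
  form_mul_map (u : B) (a : A) : form (u * f a) = form u * a
  sum_map_form_mul_left (u : B) : ∑ i, g (form (u * right i)) * left i = u
  sum_right_mul_map_form (u : B) : ∑ i, right i * f (form (left i * u)) = u

namespace FrobeniusSystem

/-- The Frobenius system on the opposite rings, with the roles of left and right exchanged. -/
def op {A : Type u₁} {B : Type u₂} [Ring A] [Ring B] {f g : A →+* B} {ι : Type*} [Fintype ι]
    (F : FrobeniusSystem f g ι) : FrobeniusSystem (RingHom.op g) (RingHom.op f) ι where
  form := AddMonoidHom.mulOp F.form
  left i := .op (F.right i)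
  right i := .op (F.left i)
  form_map_mul a u := MulOpposite.unop_injective (F.form_mul_map u.unop a.unop)
  form_mul_map u a := MulOpposite.unop_injective (F.form_map_mul a.unop u.unop)
  sum_map_form_mul_left u := MulOpposite.unop_injective <| by
    simpa using F.sum_right_mul_map_form u.unop
  sum_right_mul_map_form u := MulOpposite.unop_injective <| by
    simpa using F.sum_map_form_mul_left u.unop

variable {A B : Type u} [Ring A] [Ring B] {f g : A →+* B} {ι : Type*} [Fintype ι]
  (F : FrobeniusSystem f g ι)

lemma sum_form_smul_left {M : Type*} [AddCommGroup M] [Module A M] (ψ : B →+ M)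
    (hψ : ∀ a u, ψ (g a * u) = a • ψ u) (u : B) :
    ∑ i, F.form (u * F.right i) • ψ (F.left i) = ψ u := by
  conv_rhs => rw [← F.sum_map_form_mul_left u]
  simp only [map_sum, hψ]

lemma sum_right_smul_left_mul {N : Type*} [AddCommGroup N] [Module B N] (ψ : B →+ N)
    (hψ : ∀ a u, ψ (g a * u) = f a • ψ u) (b : B) :
    ∑ i, F.right i • ψ (F.left i * b) = b • ∑ i, F.right i • ψ (F.left i) := by
  have expand (i : ι) :
      ψ (F.left i * b) = ∑ j, f (F.form (F.left i * (b * F.right j))) • ψ (F.left j) := by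
    conv_lhs => rw [← F.sum_map_form_mul_left (F.left i * b)]
    simp only [map_sum, hψ, mul_assoc]
  simp only [expand, Finset.smul_sum, smul_smul]
  rw [Finset.sum_comm]
  simp only [← Finset.sum_smul, F.sum_right_mul_map_form]

/-- The unit `m ↦ (u ↦ form u • m)` of `coextendRestrictScalarsAdj`. -/
noncomputable def unitApp (M : ModuleCat.{u} A) :
    M ⟶ (ModuleCat.restrictScalars f).obj ((ModuleCat.coextendScalars g).obj M) :=
  ModuleCat.ofHom (Y := (ModuleCat.restrictScalars f).obj ((ModuleCat.coextendScalars g).obj M))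
    { toFun m := coextendMk g M (((smulAddHom A M).flip m).comp F.form) fun a u => by
        simp [F.form_map_mul, mul_smul]
      map_add' m m' := coextendEval_injective <| by
        ext u
        exact smul_add (F.form u) m m'
      map_smul' a m := coextendEval_injective <| by
        ext u
        change F.form u • a • m = F.form (u * f a) • m
        rw [F.form_mul_map, mul_smul] }

/-- The counit `ψ ↦ ∑ i, right i • ψ (left i)` of `coextendRestrictScalarsAdj`. -/
noncomputable def counitApp (N : ModuleCat.{u} B) :
    (ModuleCat.coextendScalars g).obj ((ModuleCat.restrictScalars f).obj N) ⟶ N :=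
  ModuleCat.ofHom
    { toFun ψ := ∑ i, F.right i • (show N from coextendEval ψ (F.left i))
      map_add' ψ χ := by
        rw [← Finset.sum_add_distrib]
        exact Finset.sum_congr rfl fun i _ => smul_add (F.right i) _ _
      map_smul' b ψ :=
        F.sum_right_smul_left_mul (N := N)
          (coextendEval (M := (ModuleCat.restrictScalars f).obj N) ψ) (coextendEval_map_mul ψ) b }

/-- Coextension along `g`, which is right adjoint to restriction along `g`, is also left adjoint
to restriction along `f`. -/
noncomputable def coextendRestrictScalarsAdj :
    ModuleCat.coextendScalars.{u, u, u} g ⊣ ModuleCat.restrictScalars.{u} f where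
  unit :=
    { app := F.unitApp
      naturality M M' h := by
        ext m
        refine coextendEval_injective ?_
        ext u
        exact (h.hom.map_smul (F.form u) m).symm }
  counit :=
    { app := F.counitApp
      naturality N N' h := by
        ext ψ
        change _ = h.hom (∑ i, F.right i • (show N from coextendEval ψ (F.left i)))
        rw [map_sum]
        exact Finset.sum_congr rfl fun i _ => (h.hom.map_smul (F.right i) _).symm }
  left_triangle_components M := by
    ext ψ (u : B)
    refine Eq.trans ?_ (F.sum_form_smul_left (coextendEval ψ) (coextendEval_map_mul ψ) u)
    exact coextendEval_sum_smul F.right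
      (fun i => F.unitApp (f := f) M (coextendEval ψ (F.left i))) u
  right_triangle_components N := by
    ext m
    change ∑ i, F.right i • f (F.form (F.left i)) • (m : N) = m
    simp only [smul_smul, ← Finset.sum_smul]
    simpa using congrArg (· • (m : N)) (F.sum_right_mul_map_form 1)

/-- The isomorphism `B ≅ Hom_A(B, A)` of left `B`-modules sending `s` to `u ↦ form (u * s)`. -/
noncomputable def selfEquivCoextend :
    ModuleCat.of B B ≃ₗ[B] (ModuleCat.coextendScalars g).obj (ModuleCat.of A A) where
  toFun (s : B) := coextendMk g (ModuleCat.of A A) (F.form.comp (AddMonoidHom.mulRight s))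
    fun a u => by simp [mul_assoc, F.form_map_mul]
  map_add' (s t : B) := coextendEval_injective <| by
    ext u
    exact (congrArg F.form (mul_add u s t)).trans (map_add F.form _ _)
  map_smul' (b s : B) := coextendEval_injective <| by
    ext u
    exact congrArg F.form (mul_assoc u b s).symm
  invFun ψ := ∑ i, F.right i * f (coextendEval ψ (F.left i))
  left_inv := F.sum_right_mul_map_form
  right_inv ψ := coextendEval_injective <| by
    ext u
    refine Eq.trans ?_ (F.sum_form_smul_left (coextendEval ψ) (coextendEval_map_mul ψ) u)
    change F.form (u * ∑ i, F.right i * f (coextendEval ψ (F.left i))) = _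
    simp only [Finset.mul_sum, ← mul_assoc, map_sum, F.form_mul_map]
    rfl

/-- When `f = g ∘ α`, an element of form `1` splits `A` off the restriction of `B` along `f`. -/
noncomputable def retract {α : A ≃+* A} (hα : ∀ a, f a = g (α a)) {b : B}
    (hb : F.form b = 1) :
    Retract (ModuleCat.of A A) ((ModuleCat.restrictScalars f).obj (ModuleCat.of B B)) where
  i := ModuleCat.ofHom (Y := (ModuleCat.restrictScalars f).obj (ModuleCat.of B B))
    { toFun a := f a * b
      map_add' a a' := (congrArg (· * b) (map_add f a a')).trans (add_mul _ _ _)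
      map_smul' a a' := (congrArg (· * b) (map_mul f a a')).trans (mul_assoc _ _ _) }
  r := ModuleCat.ofHom (X := (ModuleCat.restrictScalars f).obj (ModuleCat.of B B))
    { toFun (u : B) := α.symm (F.form u)
      map_add' (u v : B) := (congrArg α.symm (map_add F.form u v)).trans (map_add α.symm _ _)
      map_smul' a (u : B) := by
        change α.symm (F.form (f a * u)) = a * α.symm (F.form u)
        simp [hα, F.form_map_mul] }
  retract := by
    ext
    change α.symm (F.form (f 1 * b)) = 1
    simp [hb]

theorem hasInjectiveDimensionLE_self_iff {α : A ≃+* A} (hα : ∀ a, f a = g (α a))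
    (hF : ∃ b, F.form b = 1) (r : ℕ) :
    HasInjectiveDimensionLE (ModuleCat.of B B) r ↔
      HasInjectiveDimensionLE (ModuleCat.of A A) r := by
  obtain ⟨b, hb⟩ := hF
  let resAdj := ModuleCat.restrictCoextendScalarsAdj.{u, u, u} g
  let coextAdj := F.coextendRestrictScalarsAdj
  have : Limits.PreservesLimitsOfSize.{0, 0} (ModuleCat.coextendScalars.{u, u, u} g) :=
    resAdj.rightAdjoint_preservesLimits
  have : Limits.PreservesColimitsOfSize.{0, 0} (ModuleCat.coextendScalars.{u, u, u} g) :=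
    coextAdj.leftAdjoint_preservesColimits
  have : Limits.PreservesLimitsOfSize.{0, 0} (ModuleCat.restrictScalars.{u} f) :=
    coextAdj.rightAdjoint_preservesLimits
  have : Limits.PreservesColimitsOfSize.{0, 0} (ModuleCat.restrictScalars.{u} f) :=
    (ModuleCat.restrictCoextendScalarsAdj.{u, u, u} f).leftAdjoint_preservesColimits
  have : (ModuleCat.coextendScalars.{u, u, u} g).PreservesInjectiveObjects :=
    Functor.preservesInjectiveObjects_of_adjunction_of_preservesMonomorphisms resAdj
  have : (ModuleCat.restrictScalars.{u} f).PreservesInjectiveObjects :=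
    Functor.preservesInjectiveObjects_of_adjunction_of_preservesMonomorphisms coextAdj
  constructor <;> intro h
  · have := hasInjectiveDimensionLE_obj (ModuleCat.restrictScalars.{u} f) h
    exact (F.retract hα hb).hasInjectiveDimensionLT (r + 1)
  · exact (ModuleCat.hasInjectiveDimensionLE_iff_of_linearEquiv F.selfEquivCoextend r).2
      (hasInjectiveDimensionLE_obj (ModuleCat.coextendScalars g) h)

end FrobeniusSystem

section FreeExtension

open Module

lemma exists_basis_of_existsUnique {A M ι : Type*} [Ring A] [AddCommGroup M] [Module A M]
    [Fintype ι] {x : ι → M} (hx : ∀ m, ∃! c : ι → A, m = ∑ i, c i • x i) :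
    ∃ b : Basis ι A M, ⇑b = x := by
  have bijective : Function.Bijective (Fintype.linearCombination A x) :=
    Function.bijective_iff_existsUnique _ |>.2 fun m => by
      simpa [Fintype.linearCombination_apply, eq_comm] using hx m
  refine ⟨.ofEquivFun (LinearEquiv.ofBijective _ bijective).symm, ?_⟩
  classical
  ext i
  simp [Fintype.linearCombination_apply]

variable {S : Type} [Ring S] {R : Subring S} {α : R ≃+* R}

lemma exists_frobeniusSystem_of_basis {ι : Type*} [Fintype ι] (b : Basis ι R S) {φ : S →+ R}
    (hφα : IsTwistedRLinear α φ) (hφR : ∀ (u : S) (r : R), φ (u * r) = φ u * r)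
    (hφ : ∀ ψ : S →+ R, IsTwistedRLinear α ψ → ∃! s, ∀ u, φ (u * s) = ψ u) :
    ∃ F : FrobeniusSystem R.subtype (R.subtype.comp (α.symm : R →+* R)) ι,
      ∃ s, F.form s = 1 := by
  have coord_twisted (i : ι) :
      IsTwistedRLinear α ((α : R →+ R).comp (b.coord i).toAddMonoidHom) := fun r u =>
    (congrArg α ((b.coord i).map_smul r u)).trans (map_mul α r _)
  choose z hz _ using fun i => hφ _ (coord_twisted i)
  replace hz (i : ι) (u : S) : φ (u * z i) = α (b.repr u i) := hz i u
  have sum_left (u : S) : ∑ i, (α.symm (φ (u * z i)) : S) * b i = u := by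
    simp only [hz, α.symm_apply_apply]
    exact b.sum_repr u
  have translate_injective {s t : S} (h : ∀ u, φ (u * s) = φ (u * t)) : s = t := by
    obtain ⟨_, -, unique⟩ := hφ (φ.comp (AddMonoidHom.mulRight t)) fun r u => by
      simp [mul_assoc, hφα r]
    exact (unique s h).trans (unique t fun _ => rfl).symm
  have sum_right (u : S) : ∑ i, z i * (φ (b i * u) : S) = u := translate_injective fun v => by
    conv_rhs => rw [← sum_left v]
    simp only [Finset.mul_sum, Finset.sum_mul, map_sum, ← mul_assoc, hφR]
    refine Finset.sum_congr rfl fun i _ => ?_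
    rw [mul_assoc, hφα, α.apply_symm_apply]
  have exists_form_eq_one : ∃ s, φ s = 1 := by
    rcases subsingleton_or_nontrivial R with _ | _
    · exact ⟨0, Subsingleton.elim _ _⟩
    · have : Nontrivial S := R.subtype_injective.nontrivial
      obtain ⟨i⟩ := b.index_nonempty
      exact ⟨b i * z i, by simp [hz]⟩
  exact ⟨{
    form := φ
    left := b
    right := z
    form_map_mul a u := by simpa using hφα (α.symm a) u
    form_mul_map := hφR
    sum_map_form_mul_left := sum_left
    sum_right_mul_map_form := sum_right }, exists_form_eq_one⟩

lemma exists_frobeniusSystem {ι : Type*} [Fintype ι] {x : ι → S}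
    (hx : ∀ s : S, ∃! c : ι → R, s = ∑ i, (c i : S) * x i) {Φ : S → (S →+ R)}
    (hΦtw : ∀ s, IsTwistedRLinear α (Φ s))
    (hΦbij : ∀ ψ : S →+ R, IsTwistedRLinear α ψ → ∃! s, Φ s = ψ)
    (hΦS : ∀ s t u : S, Φ (t * s) u = Φ s (u * t))
    (hΦR : ∀ (s : S) (r : R) (u : S), Φ (s * r) u = Φ s u * r) :
    ∃ F : FrobeniusSystem R.subtype (R.subtype.comp (α.symm : R →+* R)) ι,
      ∃ s, F.form s = 1 := by
  obtain ⟨b, -⟩ := exists_basis_of_existsUnique (A := R) (x := x) hx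
  exact exists_frobeniusSystem_of_basis b (hΦtw 1)
    (fun u r => by rw [← hΦS, ← hΦR, mul_one, one_mul])
    (fun ψ hψ => by simpa only [DFunLike.ext_iff, ← hΦS, mul_one] using hΦbij ψ hψ)

end FreeExtension

theorem stmt11_general {A B : Type} [Ring A] [Ring B] {f g : A →+* B} {ι : Type*} [Fintype ι]
    (F : FrobeniusSystem f g ι) {α : A ≃+* A} (hα : ∀ a, f a = g (α a))
    (hF : ∃ b, F.form b = 1) :
    (∀ r : ℕ, injDimLE B (ModuleCat.of B B) r ↔ injDimLE A (ModuleCat.of A A) r) ∧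
      (∀ r : ℕ, injDimLE Bᵐᵒᵖ (ModuleCat.of Bᵐᵒᵖ Bᵐᵒᵖ) r ↔
        injDimLE Aᵐᵒᵖ (ModuleCat.of Aᵐᵒᵖ Aᵐᵒᵖ) r) := by
  simp only [injDimLE_iff_hasInjectiveDimensionLE]
  refine ⟨F.hasInjectiveDimensionLE_self_iff hα hF,
    F.op.hasInjectiveDimensionLE_self_iff (α := RingEquiv.op α.symm) (fun a => ?_) ?_⟩
  · exact congrArg MulOpposite.op (by simp [hα])
  · obtain ⟨b, hb⟩ := hF
    exact ⟨.op b, congrArg MulOpposite.op hb⟩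

/-- let `R ⊆ S` be a free `α`-Frobenius extension (i.e. `S` is finitely
generated free as a left and as a right `R`-module, and `S ≅ Hom_R(S, _αR)` as
`(S,R)`-bimodules, the isomorphism being given here by `Φ`).  Then `R` and `S` have the
same self-injective dimension, as left and as right modules over themselves. -/
theorem stmt11 (S : Type) [Ring S] (R : Subring S) (α : R ≃+* R) (n : ℕ)
    (x y : Fin n → S)
    (hx : ∀ s : S, ∃! c : Fin n → R, s = ∑ i, (c i : S) * x i)
    (hy : ∀ s : S, ∃! c : Fin n → R, s = ∑ i, y i * (c i : S))
    (Φ : S → (S →+ R))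
    (hΦtw : ∀ s : S, IsTwistedRLinear α (Φ s))
    (hΦbij : ∀ ψ : S →+ R, IsTwistedRLinear α ψ → ∃! s : S, Φ s = ψ)
    (hΦadd : ∀ s t : S, Φ (s + t) = Φ s + Φ t)
    (hΦS : ∀ s t u : S, Φ (t * s) u = Φ s (u * t))
    (hΦR : ∀ (s : S) (r : R) (u : S), Φ (s * (r : S)) u = Φ s u * r) :
    (∀ r : ℕ, injDimLE S (ModuleCat.of S S) r ↔ injDimLE R (ModuleCat.of R R) r) ∧
      (∀ r : ℕ, injDimLE Sᵐᵒᵖ (ModuleCat.of Sᵐᵒᵖ Sᵐᵒᵖ) r ↔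
        injDimLE (↥R)ᵐᵒᵖ (ModuleCat.of (↥R)ᵐᵒᵖ (↥R)ᵐᵒᵖ) r) := by
  obtain ⟨F, hF⟩ := exists_frobeniusSystem hx hΦtw hΦbij hΦS hΦR
  exact stmt11_general F (α := α) (by simp) hF
end
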